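/- For every k with 1 ≤ k ≤ n−1, the determinant of the matrix B_{Q,n−k+1} := ∑_{m=k}^{n} M_q(t_{m,k}) factors as det B_{Q,n−k+1} = ∏_{m=2}^{n−k+1} ∏_{T} (1 − σ_T)^{(m−2)!·(n−m)!}, where the inner product runs over all subsets T ⊆ Fin n of cardinality m. (For k = 1 this gives the determinant of the matrix of the multidegree operator ∂^Q on a generic weight subspace of the free associative algebra.) -/

import Mathlib

/-- The square complex matrices indexed by the symmetric group `Equiv.Perm (Fin n)`. -/
abbrev PermMatrix (n : ℕ) := Matrix (Equiv.Perm (Fin n)) (Equiv.Perm (Fin n)) ℂ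

/-- The set of inversions `I(g) = {(a,b) : a < b and g(a) > g(b)}` of a permutation. -/
def invSet {n : ℕ} (g : Equiv.Perm (Fin n)) : Finset (Fin n × Fin n) :=
  Finset.univ.filter fun p => p.1 < p.2 ∧ g p.2 < g p.1

/-- The matrix `M_q(g)`, with `(σ,τ)`-entry `∏_{(a,b) ∈ I(g)} q (τ b) (τ a)`
if `σ = τ ∘ g⁻¹` and `0` otherwise. -/
def twistMat (n : ℕ) (q : Fin n → Fin n → ℂ) (g : Equiv.Perm (Fin n)) : PermMatrix n :=
  fun σ τ => if σ = τ * g⁻¹ then ∏ p ∈ invSet g, q (τ p.2) (τ p.1) else 0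

/-- `IsTCycle a b s` says that `s` is the cycle `t_{b,a}` (for `a ≤ b`):
`s i = i + 1` for `a ≤ i ≤ b - 1`, `s b = a`, and `s i = i` otherwise
(in particular `t_{b,b} = id`). -/
def IsTCycle {n : ℕ} (a b : Fin n) (s : Equiv.Perm (Fin n)) : Prop :=
  (∀ i : Fin n, a ≤ i → i < b → (s i : ℕ) = (i : ℕ) + 1) ∧ s b = a ∧
    ∀ i : Fin n, ¬(a ≤ i ∧ i ≤ b) → s i = i

/-- `σ_T = ∏_{i,j ∈ T, i ≠ j} q i j`, the product over all ordered pairs of distinct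
elements of `T`. -/
def sigmaT {n : ℕ} (q : Fin n → Fin n → ℂ) (T : Finset (Fin n)) : ℂ :=
  ∏ p ∈ (T ×ˢ T).filter fun p => p.1 ≠ p.2, q p.1 p.2

open Finset

/-- Determinant of the identity minus a weighted cyclic shift. -/
theorem det_cyc {R : Type*} [CommRing R] (L : ℕ) (hL : 0 < L) (w : Fin L → R) :
    (Matrix.of fun i j : Fin L =>
      (if i = j then (1 : R) else 0) - (if (i : ℕ) = ((j : ℕ) + 1) % L then w j else 0)).det
      = 1 - ∏ i, w i := by
  obtain ⟨l, rfl⟩ : ∃ l, L = l + 1 := ⟨L - 1, by omega⟩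
  rcases Nat.eq_zero_or_pos l with rfl | hl
  · simp
  set M : Matrix (Fin (l+1)) (Fin (l+1)) R := Matrix.of fun i j : Fin (l+1) =>
      (if i = j then (1 : R) else 0) - (if (i : ℕ) = ((j : ℕ) + 1) % (l+1) then w j else 0) with hM
  have hMod : ∀ j : Fin (l+1), ((j : ℕ) + 1) % (l+1) = if (j:ℕ) = l then 0 else (j:ℕ) + 1 := by
    intro j
    split_ifs with h
    · rw [h]; simp
    · apply Nat.mod_eq_of_lt; omega
  rw [Matrix.det_succ_row_zero]
  have hne : (0 : Fin (l+1)) ≠ Fin.last l := by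
    intro h; have := congrArg Fin.val h; simp at this; omega
  rw [Finset.sum_eq_add_of_mem 0 (Fin.last l) (mem_univ _) (mem_univ _) hne]
  · have h1 : (M.submatrix Fin.succ (Fin.succAbove 0)).det = 1 := by
      rw [Matrix.det_of_isLowerTriangular]
      · apply Finset.prod_eq_one
        intro i _
        simp only [hM, Matrix.submatrix_apply, Matrix.of_apply, Fin.zero_succAbove]
        rw [if_pos trivial, if_neg, sub_zero]
        rw [hMod, Fin.val_succ]
        intro h
        by_cases h' : (i : ℕ) + 1 = l
        · rw [if_pos h'] at h; omega
        · rw [if_neg h'] at h; omega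
      · intro i j hij
        have hij' : (i:ℕ) < j := hij
        simp only [hM, Matrix.submatrix_apply, Matrix.of_apply, hMod]
        have e1 : (i.succ : Fin (l+1)) ≠ Fin.succAbove 0 j := by
          intro h; have := congrArg Fin.val h; simp at this; omega
        rw [if_neg e1, if_neg]
        · simp
        · rw [Fin.zero_succAbove, Fin.val_succ, Fin.val_succ]
          intro h
          by_cases h' : (j : ℕ) + 1 = l
          · rw [if_pos h'] at h; omega
          · rw [if_neg h'] at h; omega
    have h2 : (M.submatrix Fin.succ (Fin.succAbove (Fin.last l))).det
        = ∏ i : Fin l, (- w i.castSucc) := by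
      rw [Matrix.det_of_isUpperTriangular]
      · apply Finset.prod_congr rfl
        intro i _
        simp only [hM, Matrix.submatrix_apply, Matrix.of_apply, hMod, Fin.succAbove_last]
        have e1 : (i.succ : Fin (l+1)) ≠ i.castSucc := by
          intro h; have := congrArg Fin.val h; simp at this
        rw [if_neg e1, if_pos]
        · simp
        · have := i.2
          simp; omega
      · intro i j hij
        have hij' : (j:ℕ) < i := hij
        simp only [hM, Matrix.submatrix_apply, Matrix.of_apply, hMod, Fin.succAbove_last]
        have e1 : (i.succ : Fin (l+1)) ≠ j.castSucc := by
          intro h; have := congrArg Fin.val h; simp at this; omega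
        rw [if_neg e1, if_neg]
        · simp
        · simp; split_ifs <;> omega
    have e0 : M 0 0 = 1 := by
      simp only [hM, Matrix.of_apply, hMod]; simp; intro h; omega
    have e1 : M 0 (Fin.last l) = - w (Fin.last l) := by
      simp only [hM, Matrix.of_apply, hMod]; simp [hne]
    rw [h1, h2, e0, e1, Fin.prod_univ_castSucc, Finset.prod_neg]
    simp
    have : ((-1:R)^l) * (-1)^l = 1 := by rw [← mul_pow]; simp
    linear_combination (-(∏ i : Fin l, w i.castSucc) * w (Fin.last l)) * this
  · intro c _ hc
    have : M 0 c = 0 := by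
      simp only [hM, Matrix.of_apply, hMod]
      have : (c:ℕ) ≠ l := fun h => hc.2 (Fin.ext h)
      rw [if_neg (Ne.symm hc.1), if_neg]
      · simp
      · simp [this]
    rw [this]; simp

/-- Weighted right translation matrix. -/
def wMat {G R : Type*} [Group G] [DecidableEq G] [CommRing R] (t : G) (w : G → R) :
    Matrix G G R := fun σ τ => if σ = τ * t⁻¹ then w τ else 0

theorem det_one_sub_wMat {G R : Type*} [Group G] [Fintype G] [DecidableEq G] [CommRing R] (t : G)
    (w : G → R) [Fintype (G ⧸ Subgroup.zpowers t)] [Fintype (Subgroup.zpowers t)] :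
    (1 - wMat t w).det = ∏ x : G ⧸ Subgroup.zpowers t,
      (1 - ∏ h : Subgroup.zpowers t, w (x.out * (h : G))) := by
  classical
  set L := orderOf t with hL
  have hLpos : 0 < L := orderOf_pos t
  let f : Fin L × (G ⧸ Subgroup.zpowers t) → G := fun p => p.2.out * (t ^ (p.1 : ℕ))⁻¹
  have hmk : ∀ (x : G ⧸ Subgroup.zpowers t) (i : ℕ),
      (QuotientGroup.mk (x.out * (t ^ i)⁻¹) : G ⧸ Subgroup.zpowers t) = x := by
    intro x i
    conv_rhs => rw [← QuotientGroup.out_eq' x]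
    rw [QuotientGroup.eq]
    simp only [mul_inv_rev, inv_inv, inv_mul_cancel_right]
    exact Subgroup.npow_mem_zpowers t i
  have hkey : ∀ (x y : G ⧸ Subgroup.zpowers t) (i j : ℕ), 
      x.out * (t ^ i)⁻¹ = y.out * (t ^ j)⁻¹ ↔ x = y ∧ i % L = j % L := by
    intro x y i j
    constructor
    · intro h
      have hxy : x = y := by rw [← hmk x i, ← hmk y j, h]
      subst hxy
      refine ⟨rfl, ?_⟩
      have := inv_injective (mul_left_cancel h)
      exact pow_inj_mod.mp this
    · rintro ⟨rfl, h⟩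
      rw [pow_inj_mod.mpr h]
  have hf : Function.Bijective f := by
    constructor
    · rintro ⟨i, x⟩ ⟨j, y⟩ h
      obtain ⟨h1, h2⟩ := (hkey x y i j).mp h
      rw [Nat.mod_eq_of_lt i.2, Nat.mod_eq_of_lt j.2] at h2
      exact Prod.ext (Fin.ext h2) h1
    · intro g
      obtain ⟨h, hh⟩ := QuotientGroup.mk_out_eq_mul (Subgroup.zpowers t) g
      obtain ⟨s, hs⟩ := (mem_powers_iff_mem_zpowers.mpr h.2)
      refine ⟨(⟨s % L, Nat.mod_lt _ hLpos⟩, QuotientGroup.mk g), ?_⟩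
      simp only [f]
      rw [hh, hL, pow_mod_orderOf]
      simp only at hs
      rw [hs]; simp
  let e : Fin L × (G ⧸ Subgroup.zpowers t) ≃ G := Equiv.ofBijective f hf
  rw [← Matrix.det_submatrix_equiv_self e]
  have : (1 - wMat t w).submatrix e e = Matrix.blockDiagonal fun x : G ⧸ Subgroup.zpowers t =>
      Matrix.of fun i j : Fin L =>
      (if i = j then (1 : R) else 0) -
        (if (i : ℕ) = ((j : ℕ) + 1) % L then w (x.out * (t ^ (j : ℕ))⁻¹) else 0) := by
    ext ⟨i, x⟩ ⟨j, y⟩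
    rw [Matrix.blockDiagonal_apply]
    simp only [Matrix.submatrix_apply, Matrix.sub_apply, Matrix.one_apply, wMat, Matrix.of_apply,
      EmbeddingLike.apply_eq_iff_eq, Prod.mk.injEq]
    have h1 : (e (i, x) = e (j, y) * t⁻¹) ↔ x = y ∧ (i : ℕ) = ((j : ℕ) + 1) % L := by
      have := hkey x y i (j+1)
      rw [Nat.mod_eq_of_lt i.2, pow_succ', mul_inv_rev, ← mul_assoc] at this
      exact this
    simp only [h1]
    by_cases hxy : x = y
    · subst hxy
      simp [e, f]
    · simp [hxy]
  rw [this, Matrix.det_blockDiagonal]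
  refine Finset.prod_congr rfl fun x _ => ?_
  rw [det_cyc L hLpos]
  congr 1
  refine Fintype.prod_equiv ((finEquivZPowers (isOfFinOrder_of_finite t)).trans (Equiv.inv _)) _ _ ?_
  intro i
  simp [finEquivZPowers_apply]

/-- Number of permutations mapping `P` onto `T`. -/
theorem card_image_eq (n : ℕ) (P T : Finset (Fin n)) (h : T.card = P.card) :
    (univ.filter fun τ : Equiv.Perm (Fin n) => P.image τ = T).card
      = (P.card).factorial * (n - P.card).factorial := by
  have hle : P.card ≤ n := by simpa using Finset.card_le_univ P
  have hconst : ∀ T' ∈ powersetCard P.card (univ : Finset (Fin n)),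
      (univ.filter fun τ : Equiv.Perm (Fin n) => P.image τ = T').card =
      (univ.filter fun τ : Equiv.Perm (Fin n) => P.image τ = T).card := by
    intro T' hT'
    rw [mem_powersetCard_univ] at hT'
    obtain ⟨g, hg⟩ : ∃ g : Equiv.Perm (Fin n), T'.image g = T := by
      have e : {x // x ∈ T'} ≃ {x // x ∈ T} := Finset.equivOfCardEq (by omega)
      refine ⟨e.extendSubtype, ?_⟩
      apply Finset.eq_of_subset_of_card_le
      · intro y hy
        obtain ⟨x, hx, rfl⟩ := mem_image.mp hy
        exact e.extendSubtype_mem x hx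
      · rw [card_image_of_injective _ (Equiv.injective _)]; omega
    refine Finset.card_bij (fun τ _ => g * τ) ?_ ?_ ?_
    · intro τ hτ
      simp only [mem_filter, mem_univ, true_and] at hτ ⊢
      rw [← hg, ← hτ, image_image]; rfl
    · intro a _ b _ hab
      exact mul_left_cancel hab
    · intro τ hτ
      simp only [mem_filter, mem_univ, true_and] at hτ
      refine ⟨g⁻¹ * τ, ?_, by simp⟩
      simp only [mem_filter, mem_univ, true_and]
      have : P.image (g⁻¹ * τ) = (P.image τ).image (g⁻¹ : Equiv.Perm (Fin n)) := by
        rw [image_image]; rfl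
      rw [this, hτ, ← hg, image_image]
      have hid : (⇑g⁻¹ ∘ ⇑g) = id := by ext x; simp
      rw [hid, Finset.image_id]
  have hsum : (univ : Finset (Equiv.Perm (Fin n))).card =
      ∑ T' ∈ powersetCard P.card (univ : Finset (Fin n)),
        (univ.filter fun τ : Equiv.Perm (Fin n) => P.image τ = T').card := by
    apply Finset.card_eq_sum_card_fiberwise
    intro τ _
    simp [card_image_of_injective _ τ.injective]
  rw [sum_congr rfl hconst, sum_const, card_powersetCard, card_univ, card_univ, Fintype.card_perm,
    Fintype.card_fin, smul_eq_mul, ← Nat.choose_mul_factorial_mul_factorial hle, mul_assoc] at hsum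
  exact (Nat.eq_of_mul_eq_mul_left (Nat.choose_pos hle) hsum).symm

/-- `t` acts on `P` simply transitively (through its powers), with base point `b`. -/
structure CycOn {n : ℕ} (t : Equiv.Perm (Fin n)) (P : Finset (Fin n)) (b : Fin n) : Prop where
  maps : ∀ i, t i ∈ P ↔ i ∈ P
  fix : ∀ i, i ∉ P → t i = i
  base : b ∈ P
  trans : ∀ i ∈ P, ∃ s : ℕ, (t ^ s) b = i

theorem CycOn.maps_zpow {n : ℕ} {t : Equiv.Perm (Fin n)} {P : Finset (Fin n)} {b : Fin n}
    (h : CycOn t P b) (g : Subgroup.zpowers t) (i : Fin n) :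
    (g : Equiv.Perm (Fin n)) i ∈ P ↔ i ∈ P := by
  obtain ⟨s, hs⟩ := (mem_powers_iff_mem_zpowers.mpr g.2)
  simp only at hs
  rw [← hs]
  clear hs
  induction s with
  | zero => simp
  | succ s ih => rw [pow_succ', Equiv.Perm.mul_apply, h.maps, ih]

theorem CycOn.fix_zpow {n : ℕ} {t : Equiv.Perm (Fin n)} {P : Finset (Fin n)} {b : Fin n}
    (h : CycOn t P b) (g : Subgroup.zpowers t) (i : Fin n) (hi : i ∉ P) :
    (g : Equiv.Perm (Fin n)) i = i := by
  obtain ⟨s, hs⟩ := (mem_powers_iff_mem_zpowers.mpr g.2)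
  simp only at hs
  rw [← hs]
  clear hs
  induction s with
  | zero => simp
  | succ s ih => rw [pow_succ', Equiv.Perm.mul_apply, ih, h.fix i hi]

theorem CycOn.prod {n : ℕ} {t : Equiv.Perm (Fin n)} {P : Finset (Fin n)} {b : Fin n}
    (h : CycOn t P b) {R : Type*} [CommMonoid R] [Fintype (Subgroup.zpowers t)] (f : Fin n → R) :
    ∏ g : Subgroup.zpowers t, f ((g : Equiv.Perm (Fin n)) b) = ∏ i ∈ P, f i := by
  refine Finset.prod_bij (fun g _ => (g : Equiv.Perm (Fin n)) b) ?_ ?_ ?_ ?_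
  · intro g _; exact (h.maps_zpow g b).mpr h.base
  · intro g _ g' _ hgg
    apply Subtype.ext
    ext i
    congr 1
    by_cases hi : i ∈ P
    · obtain ⟨s, rfl⟩ := h.trans i hi
      have hc : ∀ g : Subgroup.zpowers t, (g : Equiv.Perm (Fin n)) ((t ^ s) b)
          = (t ^ s) ((g : Equiv.Perm (Fin n)) b) := by
        rintro ⟨_, z, rfl⟩
        change (t ^ z * t ^ s) b = (t ^ s * t ^ z) b
        rw [← zpow_natCast, zpow_mul_comm]
      rw [hc, hc]
      exact congrArg _ hgg
    · rw [h.fix_zpow g i hi, h.fix_zpow g' i hi]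
  · intro i hi
    obtain ⟨s, hs⟩ := h.trans i hi
    exact ⟨⟨t ^ s, Subgroup.npow_mem_zpowers t s⟩, mem_univ _, hs⟩
  · intro g _; rfl

theorem CycOn.card {n : ℕ} {t : Equiv.Perm (Fin n)} {P : Finset (Fin n)} {b : Fin n}
    (h : CycOn t P b) [Fintype (Subgroup.zpowers t)] :
    Fintype.card (Subgroup.zpowers t) = P.card := by
  have := h.prod (R := Multiplicative ℕ) (fun _ => Multiplicative.ofAdd 1)
  rw [prod_const, prod_const, ← ofAdd_nsmul, ← ofAdd_nsmul] at this
  simpa using this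

/-- Number of cosets of the cyclic group whose representative maps `P` onto `T`. -/
theorem card_coset {n : ℕ} {t : Equiv.Perm (Fin n)} {P' P : Finset (Fin n)} {b : Fin n}
    (h : CycOn t P' b) (hP : ∀ g : Subgroup.zpowers t, P.image (g : Equiv.Perm (Fin n)) = P)
    [Fintype (Equiv.Perm (Fin n) ⧸ Subgroup.zpowers t)]
    (T : Finset (Fin n)) (hT : T.card = P.card) :
    (univ.filter fun x : Equiv.Perm (Fin n) ⧸ Subgroup.zpowers t => P.image x.out = T).card
      * P'.card = P.card.factorial * (n - P.card).factorial := by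
  classical
  rw [← card_image_eq n P T hT, ← h.card, ← Finset.card_univ, ← Finset.card_product]
  refine Finset.card_bij (fun p _ => p.1.out * (p.2 : Equiv.Perm (Fin n))) ?_ ?_ ?_
  · rintro ⟨x, g⟩ hx
    simp only [mem_product, mem_filter, mem_univ, true_and, and_true] at hx ⊢
    rw [← hx]
    conv_rhs => rw [← hP g]
    rw [image_image]; rfl
  · rintro ⟨x, g⟩ _ ⟨y, g'⟩ _ hxy
    simp only at hxy
    have hmk : ∀ (x : Equiv.Perm (Fin n) ⧸ Subgroup.zpowers t) (g : Subgroup.zpowers t),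
        (QuotientGroup.mk (x.out * (g : Equiv.Perm (Fin n))) :
          Equiv.Perm (Fin n) ⧸ Subgroup.zpowers t) = x := by
      intro x g
      rw [QuotientGroup.mk_mul_of_mem _ g.2, QuotientGroup.out_eq']
    have e : x = y := by rw [← hmk x g, hxy, hmk y g']
    subst e
    have := mul_left_cancel hxy
    rw [Subtype.ext this]
  · intro τ hτ
    simp only [mem_filter, mem_univ, true_and] at hτ
    obtain ⟨g, hg⟩ := QuotientGroup.mk_out_eq_mul (Subgroup.zpowers t) τ
    refine ⟨(QuotientGroup.mk τ, g⁻¹), ?_, ?_⟩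
    · simp only [mem_product, mem_filter, mem_univ, true_and, and_true]
      rw [hg, ← hτ]
      conv_rhs => rw [← hP g]
      rw [image_image]; rfl
    · simp [hg]

/-- Determinant of `1 - W` when the cyclic product of weights depends only on `τ(P)`. -/
theorem det_one_sub_wMat_of_cycOn {n : ℕ} {R : Type*} [CommRing R] {t : Equiv.Perm (Fin n)}
    {P' P : Finset (Fin n)} {b : Fin n}
    (h : CycOn t P' b) (hP : ∀ g : Subgroup.zpowers t, P.image (g : Equiv.Perm (Fin n)) = P)
    [Fintype (Subgroup.zpowers t)]
    (w : Equiv.Perm (Fin n) → R) (s : Finset (Fin n) → R)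
    (hw : ∀ τ : Equiv.Perm (Fin n),
      ∏ g : Subgroup.zpowers t, w (τ * (g : Equiv.Perm (Fin n))) = s (P.image τ))
    (N : ℕ) (hN : N * P'.card = P.card.factorial * (n - P.card).factorial) :
    (1 - wMat t w).det = ∏ T ∈ powersetCard P.card univ, (1 - s T) ^ N := by
  classical
  have := Fintype.ofFinite (Equiv.Perm (Fin n) ⧸ Subgroup.zpowers t)
  rw [det_one_sub_wMat]
  simp only [hw]
  rw [← Finset.prod_fiberwise_of_maps_to (s := univ) (t := powersetCard P.card univ)
    (g := fun x : Equiv.Perm (Fin n) ⧸ Subgroup.zpowers t => P.image x.out)]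
  · refine Finset.prod_congr rfl fun T hT => ?_
    rw [mem_powersetCard_univ] at hT
    have h1 := card_coset h hP T hT
    rw [← hN] at h1
    have hpos : 0 < P'.card := card_pos.mpr ⟨b, h.base⟩
    rw [← Nat.eq_of_mul_eq_mul_right hpos h1, ← prod_const]
    refine Finset.prod_congr rfl fun x hx => ?_
    rw [(mem_filter.mp hx).2]
  · intro x _
    simp [card_image_of_injective _ (Equiv.injective _)]

theorem IsTCycle.val {n : ℕ} {a b : Fin n} {s : Equiv.Perm (Fin n)} (hs : IsTCycle a b s)
    (i : Fin n) : (s i : ℕ) = if (a : ℕ) ≤ i ∧ (i : ℕ) < b then (i : ℕ) + 1 else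
      if (i : ℕ) = b then (a : ℕ) else i := by
  obtain ⟨h1, h2, h3⟩ := hs
  split_ifs with h h'
  · exact h1 i h.1 h.2
  · have : i = b := Fin.ext h'
    rw [this, h2]
  · rw [h3 i]
    rintro ⟨h4, h5⟩
    rw [Fin.le_def] at h4 h5
    omega

theorem IsTCycle.inv_val {n : ℕ} {a b : Fin n} {s : Equiv.Perm (Fin n)} (hs : IsTCycle a b s)
    (hab : a ≤ b)
    (i : Fin n) : (s⁻¹ i : Fin n).val = if (a : ℕ) < i ∧ (i : ℕ) ≤ b then (i : ℕ) - 1 else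
      if (i : ℕ) = a then (b : ℕ) else i := by
  obtain ⟨x, rfl⟩ := s.surjective i
  rw [Fin.le_def] at hab
  rw [show s⁻¹ (s x) = x by simp, hs.val x]
  split_ifs <;> omega

theorem IsTCycle.cycOn {n : ℕ} {a b : Fin n} {s : Equiv.Perm (Fin n)} (hs : IsTCycle a b s)
    (hab : a ≤ b) : CycOn s (Icc a b) b where
  maps i := by
    rw [Fin.le_def] at hab
    simp only [mem_Icc, Fin.le_def, hs.val i]
    split_ifs <;> omega
  fix i hi := hs.2.2 i (by simpa using hi)
  base := by simp [hab]
  trans := by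
    have : ∀ d : ℕ, ∀ i : Fin n, (i : ℕ) = a + d → i ≤ b → ∃ e : ℕ, (s ^ e) b = i := by
      intro d
      induction d with
      | zero =>
        intro i hi _
        exact ⟨1, by rw [pow_one, hs.2.1]; exact Fin.ext hi.symm⟩
      | succ d ih =>
        intro i hi hib
        rw [Fin.le_def] at hib
        obtain ⟨e, he⟩ := ih ⟨a + d, by omega⟩ rfl (by rw [Fin.le_def]; simp; omega)
        refine ⟨e + 1, ?_⟩
        rw [pow_succ', Equiv.Perm.mul_apply, he]
        apply Fin.ext
        rw [hs.val, if_pos]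
        · simp; omega
        · simp; omega
    intro i hi
    rw [mem_Icc] at hi
    have h1 : (a : ℕ) ≤ i := hi.1
    exact this (i - a) i (by omega) hi.2

section weights
variable {n : ℕ} {R : Type*} [CommRing R]

/-- Weight of moving the letter at position `j` to position `k`. -/
def wA (q : Fin n → Fin n → R) (k j : Fin n) (τ : Equiv.Perm (Fin n)) : R :=
  ∏ i ∈ Ico k j, q (τ j) (τ i)

/-- Weight of the correction operator. -/
def wD (q : Fin n → Fin n → R) (k j : Fin n) (τ : Equiv.Perm (Fin n)) : R :=
  q (τ k) (τ j) * wA q k j τ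

/-- `σ_T` over a general ring. -/
def sg (q : Fin n → Fin n → R) (T : Finset (Fin n)) : R :=
  ∏ x ∈ T, ∏ y ∈ T.erase x, q x y

theorem image_zpow {t : Equiv.Perm (Fin n)} {P : Finset (Fin n)}
    (h : ∀ i, i ∈ P → t i ∈ P) (g : Subgroup.zpowers t) :
    P.image (g : Equiv.Perm (Fin n)) = P := by
  apply Finset.eq_of_subset_of_card_le
  · intro y hy
    obtain ⟨x, hx, rfl⟩ := mem_image.mp hy
    obtain ⟨s, hs⟩ := (mem_powers_iff_mem_zpowers.mpr g.2)
    simp only at hs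
    rw [← hs]
    clear hs hy
    induction s with
    | zero => simpa
    | succ s ih => rw [pow_succ', Equiv.Perm.mul_apply]; exact h _ ih
  · rw [card_image_of_injective _ (Equiv.injective _)]

theorem wA_mul (q : Fin n → Fin n → R) {k j : Fin n} (τ g : Equiv.Perm (Fin n))
    (hg : (Icc k j).image g = Icc k j) :
    wA q k j (τ * g) = ∏ y ∈ ((Icc k j).image τ).erase (τ (g j)), q (τ (g j)) y := by
  have h1 : ((Icc k j).image τ).erase (τ (g j)) = (Ico k j).image (fun i => τ (g i)) := by
    rw [← Icc_erase_right]
    have : (fun i => τ (g i)) = ⇑τ ∘ ⇑g := rfl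
    rw [this, ← image_image, image_erase g.injective, image_erase τ.injective, hg]
  rw [h1, prod_image]
  · rfl
  · intro x _ y _ hxy; exact g.injective (τ.injective hxy)

theorem prod_wA (q : Fin n → Fin n → R) {k j : Fin n} (hkj : k ≤ j) {t : Equiv.Perm (Fin n)}
    (ht : IsTCycle k j t) [Fintype (Subgroup.zpowers t)] (τ : Equiv.Perm (Fin n)) :
    ∏ g : Subgroup.zpowers t, wA q k j (τ * (g : Equiv.Perm (Fin n)))
      = sg q ((Icc k j).image τ) := by
  have hc := ht.cycOn hkj
  have h1 : ∀ g : Subgroup.zpowers t, wA q k j (τ * (g : Equiv.Perm (Fin n))) =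
      (fun x => ∏ y ∈ ((Icc k j).image τ).erase (τ x), q (τ x) y) ((g : Equiv.Perm (Fin n)) j) :=
    fun g => wA_mul q τ g (image_zpow (fun i hi => (hc.maps i).mpr hi) g)
  rw [Finset.prod_congr rfl (fun g _ => h1 g),
    hc.prod (fun x => ∏ y ∈ ((Icc k j).image τ).erase (τ x), q (τ x) y), sg, prod_image]
  intro x _ y _ hxy; exact τ.injective hxy

theorem prod_wD (q : Fin n → Fin n → R) {k k1 j : Fin n} (hk1 : (k1 : ℕ) = k + 1) (hkj : k < j)
    {t : Equiv.Perm (Fin n)}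
    (ht : IsTCycle k1 j t) [Fintype (Subgroup.zpowers t)] (τ : Equiv.Perm (Fin n)) :
    ∏ g : Subgroup.zpowers t, wD q k j (τ * (g : Equiv.Perm (Fin n)))
      = sg q ((Icc k j).image τ) := by
  have hk1j : k1 ≤ j := by rw [Fin.le_def]; rw [Fin.lt_def] at hkj; omega
  have hc := ht.cycOn hk1j
  have hP : Icc k1 j = (Icc k j).erase k := by
    ext i; simp only [mem_Icc, mem_erase, Fin.le_def, ne_eq, Fin.ext_iff]; omega
  have hkP : k ∉ Icc k1 j := by rw [hP]; simp
  have hmaps : ∀ i, i ∈ Icc k j → t i ∈ Icc k j := by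
    intro i hi
    by_cases h : i = k
    · rw [h, hc.fix k hkP]; simp [hkj.le]
    · have h2 : i ∈ Icc k1 j := by rw [hP]; exact mem_erase.mpr ⟨h, hi⟩
      have h3 := (hc.maps i).mpr h2
      rw [hP] at h3
      exact mem_of_mem_erase h3
  have h1 : ∀ g : Subgroup.zpowers t, wD q k j (τ * (g : Equiv.Perm (Fin n))) =
      (fun x => q (τ k) (τ x) * ∏ y ∈ ((Icc k j).image τ).erase (τ x), q (τ x) y)
        ((g : Equiv.Perm (Fin n)) j) := by
    intro g
    rw [wD, wA_mul q τ g (image_zpow hmaps g)]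
    simp only [Equiv.Perm.mul_apply, hc.fix_zpow g k hkP]
  rw [Finset.prod_congr rfl (fun g _ => h1 g),
    hc.prod (fun x => q (τ k) (τ x) * ∏ y ∈ ((Icc k j).image τ).erase (τ x), q (τ x) y), sg, prod_image, prod_mul_distrib, hP,
    ← Finset.mul_prod_erase (Icc k j) _ (left_mem_Icc.mpr hkj.le)]
  · congr 1
    rw [← image_erase τ.injective, prod_image]
    intro x _ y _ hxy; exact τ.injective hxy
  · intro x _ y _ hxy; exact τ.injective hxy

theorem wMat_mul {G : Type*} [Group G] [Fintype G] [DecidableEq G] (t t' : G) (w w' : G → R) :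
    wMat t w * wMat t' w' = wMat (t * t') (fun τ => w' τ * w (τ * t'⁻¹)) := by
  ext σ τ
  rw [Matrix.mul_apply, Finset.sum_eq_single (τ * t'⁻¹)]
  · simp only [wMat, mul_inv_rev, mul_assoc, if_true]
    split_ifs
    · ring
    · simp
  · intro ρ _ hρ
    simp [wMat, hρ]
  · simp

theorem key_mul (q : Fin n → Fin n → R) (t : Fin n → Fin n → Equiv.Perm (Fin n))
    (ht : ∀ a b : Fin n, a ≤ b → IsTCycle a b (t b a)) {k k1 m m1 j : Fin n}
    (hk1 : (k1 : ℕ) = k + 1) (hm1 : (m1 : ℕ) = m + 1) (hkm : k ≤ m) (hmj : m < j) :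
    wMat (t m1 k) (wA q k m1) * wMat (t j k) (wA q k j)
      = wMat (t j k1) (wD q k j) * wMat (t m k) (wA q k m) := by
  rw [Fin.le_def] at hkm
  rw [Fin.lt_def] at hmj
  have c1 := ht k m1 (by rw [Fin.le_def]; omega)
  have c2 := ht k j (by rw [Fin.le_def]; omega)
  have c3 := ht k1 j (by rw [Fin.le_def]; omega)
  have c4 := ht k m (by rw [Fin.le_def]; omega)
  rw [wMat_mul, wMat_mul]
  have hperm : t m1 k * t j k = t j k1 * t m k := by
    ext i
    simp only [Equiv.Perm.mul_apply, c1.val, c2.val, c3.val, c4.val]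
    split_ifs <;> omega
  rw [hperm]
  congr 1
  funext τ
  have hk_inv2 : (t j k)⁻¹ m1 = m := by
    apply Fin.ext; rw [c2.inv_val (by rw [Fin.le_def]; omega)]; split_ifs <;> omega
  have hj_inv4 : (t m k)⁻¹ j = j := by
    apply Fin.ext; rw [c4.inv_val (by rw [Fin.le_def]; omega)]; split_ifs <;> omega
  have hk_inv4 : (t m k)⁻¹ k = m := by
    apply Fin.ext; rw [c4.inv_val (by rw [Fin.le_def]; omega)]; split_ifs <;> omega
  have e1 : wA q k m1 (τ * (t j k)⁻¹) = q (τ m) (τ j) * wA q k m τ := by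
    simp only [wA, Equiv.Perm.mul_apply, hk_inv2]
    have hnot : j ∉ Ico k m := by simp only [mem_Ico, Fin.lt_def]; omega
    rw [← prod_insert (f := fun i => q (τ m) (τ i)) hnot]
    refine Finset.prod_equiv (t j k)⁻¹ ?_ (fun _ _ => rfl)
    intro i
    simp only [mem_Ico, mem_insert, Fin.le_def, Fin.lt_def, Fin.ext_iff,
      c2.inv_val (by rw [Fin.le_def]; omega)]
    split_ifs <;> omega
  have e2 : wA q k j (τ * (t m k)⁻¹) = wA q k j τ := by
    simp only [wA, Equiv.Perm.mul_apply, hj_inv4]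
    refine Finset.prod_equiv (t m k)⁻¹ ?_ (fun _ _ => rfl)
    intro i
    simp only [mem_Ico, Fin.le_def, Fin.lt_def, c4.inv_val (by rw [Fin.le_def]; omega)]
    split_ifs <;> omega
  rw [e1, wD, e2, Equiv.Perm.mul_apply, Equiv.Perm.mul_apply, hj_inv4, hk_inv4]
  ring

theorem twist_eq (q : Fin n → Fin n → ℂ) {k m : Fin n} (hkm : k ≤ m) {t : Equiv.Perm (Fin n)}
    (ht : IsTCycle k m t) : twistMat n q t = wMat t (wA q k m) := by
  ext σ τ
  simp only [twistMat, wMat, wA]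
  have : invSet t = (Ico k m).image (fun i => (i, m)) := by
    rw [Fin.le_def] at hkm
    ext ⟨a, b⟩
    simp only [invSet, mem_filter, mem_univ, true_and, mem_image, mem_Ico, Prod.mk.injEq,
      Fin.lt_def, Fin.le_def, ht.val]
    constructor
    · intro h
      refine ⟨a, ?_, rfl, ?_⟩
      · split_ifs at h <;> omega
      · apply Fin.ext; split_ifs at h <;> omega
    · rintro ⟨i, hi, rfl, rfl⟩
      split_ifs <;> omega
  rw [this, prod_image]
  intro x _ y _ hxy; exact congrArg Prod.fst hxy

theorem sigmaT_eq (q : Fin n → Fin n → ℂ) (T : Finset (Fin n)) : sigmaT q T = sg q T := by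
  rw [sigmaT, sg, prod_filter, prod_product]
  refine Finset.prod_congr rfl fun x _ => ?_
  rw [← prod_filter]
  refine Finset.prod_congr ?_ fun _ _ => rfl
  ext y
  simp only [mem_filter, mem_erase, ne_eq]
  constructor
  · rintro ⟨h1, h2⟩; exact ⟨fun h => h2 h.symm, h1⟩
  · rintro ⟨h1, h2⟩; exact ⟨h2, fun h => h1 h.symm⟩

/-- The factor indexed by subsets of size `m`. -/
def gFac (q : Fin n → Fin n → R) (m : ℕ) : R :=
  ∏ T ∈ powersetCard m (univ : Finset (Fin n)),
    (1 - sg q T) ^ (Nat.factorial (m - 2) * Nat.factorial (n - m))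

theorem det_A (q : Fin n → Fin n → R) {k j : Fin n} (hkj : k < j) {t : Equiv.Perm (Fin n)}
    (ht : IsTCycle k j t) :
    (1 - wMat t (wA q k j)).det = gFac q (j - k + 1) ^ ((j : ℕ) - k) := by
  classical
  have hc := ht.cycOn hkj.le
  have : Fintype (Subgroup.zpowers t) := Fintype.ofFinite _
  have hcard : (Icc k j).card = j - k + 1 := by
    rw [Fin.lt_def] at hkj; rw [Fin.card_Icc]; omega
  rw [det_one_sub_wMat_of_cycOn hc (image_zpow fun i hi => (hc.maps i).mpr hi) _ (sg q)
    (prod_wA q hkj.le ht)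
    ((((j : ℕ) - k + 1 - 2).factorial * (n - (j - k + 1)).factorial) * ((j : ℕ) - k))]
  · rw [hcard, gFac, ← prod_pow]
    simp only [pow_mul]
  · rw [hcard]
    rw [Fin.lt_def] at hkj
    obtain ⟨d, hd⟩ : ∃ d, (j : ℕ) - k = d + 1 := ⟨j - k - 1, by omega⟩
    rw [hd]
    simp only [Nat.factorial_succ, show d + 1 + 1 - 2 = d by omega]
    ring

theorem det_D (q : Fin n → Fin n → R) {k k1 j : Fin n} (hk1 : (k1 : ℕ) = k + 1) (hkj : k < j)
    {t : Equiv.Perm (Fin n)} (ht : IsTCycle k1 j t) :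
    (1 - wMat t (wD q k j)).det = gFac q (j - k + 1) ^ ((j : ℕ) - k + 1) := by
  classical
  have hk1j : k1 ≤ j := by rw [Fin.le_def]; rw [Fin.lt_def] at hkj; omega
  have hc := ht.cycOn hk1j
  have : Fintype (Subgroup.zpowers t) := Fintype.ofFinite _
  have hcard : (Icc k j).card = j - k + 1 := by
    rw [Fin.lt_def] at hkj; rw [Fin.card_Icc]; omega
  have hcard1 : (Icc k1 j).card = j - k := by
    rw [Fin.lt_def] at hkj; rw [Fin.card_Icc]; omega
  have hP : Icc k1 j = (Icc k j).erase k := by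
    ext i; simp only [mem_Icc, mem_erase, Fin.le_def, ne_eq, Fin.ext_iff]; omega
  have hkP : k ∉ Icc k1 j := by rw [hP]; simp
  have hmaps : ∀ i, i ∈ Icc k j → t i ∈ Icc k j := by
    intro i hi
    by_cases h : i = k
    · rw [h, hc.fix k hkP]; simp [hkj.le]
    · have h2 : i ∈ Icc k1 j := by rw [hP]; exact mem_erase.mpr ⟨h, hi⟩
      have h3 := (hc.maps i).mpr h2
      rw [hP] at h3
      exact mem_of_mem_erase h3
  rw [det_one_sub_wMat_of_cycOn hc (image_zpow hmaps) _ (sg q)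
    (prod_wD q hk1 hkj ht)
    ((((j : ℕ) - k + 1 - 2).factorial * (n - (j - k + 1)).factorial) * ((j : ℕ) - k + 1))]
  · rw [hcard, gFac, ← prod_pow]
    simp only [pow_mul]
  · rw [hcard, hcard1]
    rw [Fin.lt_def] at hkj
    obtain ⟨d, hd⟩ : ∃ d, (j : ℕ) - k = d + 1 := ⟨j - k - 1, by omega⟩
    rw [hd]
    simp only [Nat.factorial_succ, show d + 1 + 1 - 2 = d by omega]
    ring

/-- The summands of `B`, indexed by the offset. -/
def aMat (q : Fin n → Fin n → R) (t : Fin n → Fin n → Equiv.Perm (Fin n)) (k : Fin n) (s : ℕ) :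
    Matrix (Equiv.Perm (Fin n)) (Equiv.Perm (Fin n)) R :=
  if h : (k : ℕ) + s < n then wMat (t ⟨k + s, h⟩ k) (wA q k ⟨k + s, h⟩) else 0

theorem aMat_zero (q : Fin n → Fin n → R) (t : Fin n → Fin n → Equiv.Perm (Fin n))
    (ht : ∀ a b : Fin n, a ≤ b → IsTCycle a b (t b a)) (k : Fin n) : aMat q t k 0 = 1 := by
  have h1 : t k k = 1 := by
    ext i
    rw [(ht k k le_rfl).val]
    simp only [Equiv.Perm.one_apply]
    split_ifs <;> omega
  simp only [aMat, add_zero, Fin.is_lt, dite_true, Fin.eta, h1]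
  ext σ τ
  simp [wMat, wA, Matrix.one_apply]

theorem det_step (q : Fin n → Fin n → R) (t : Fin n → Fin n → Equiv.Perm (Fin n))
    (ht : ∀ a b : Fin n, a ≤ b → IsTCycle a b (t b a)) (k : Fin n) (s : ℕ)
    (hs : (k : ℕ) + (s + 1) < n) :
    (∑ i ∈ range (s + 2), aMat q t k i).det * gFac q (s + 2) ^ (s + 1) =
      gFac q (s + 2) ^ (s + 2) * (∑ i ∈ range (s + 1), aMat q t k i).det := by
  let j : Fin n := ⟨k + (s + 1), hs⟩
  let k1 : Fin n := ⟨k + 1, by omega⟩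
  have hkj : k < j := by rw [Fin.lt_def]; simp only [j]; omega
  have hk1j : k1 ≤ j := by rw [Fin.le_def]; simp only [j, k1]; omega
  have hjk : (j : ℕ) - k = s + 1 := by simp only [j]; omega
  have hA := det_A q hkj (ht k j hkj.le)
  have hD := det_D q (k1 := k1) rfl hkj (ht k1 j hk1j)
  rw [hjk] at hA hD
  have hAj : aMat q t k (s + 1) = wMat (t j k) (wA q k j) := by
    simp only [aMat, hs, dite_true, j]
  have hkey : ∀ i ∈ range (s + 1), aMat q t k (i + 1) * aMat q t k (s + 1) =
      wMat (t j k1) (wD q k j) * aMat q t k i := by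
    intro i hi
    rw [mem_range] at hi
    have h1 : (k : ℕ) + (i + 1) < n := by omega
    have h2 : (k : ℕ) + i < n := by omega
    rw [hAj]
    simp only [aMat, h1, h2, dite_true]
    apply key_mul q t ht rfl rfl
    · rw [Fin.le_def]; simp
    · rw [Fin.lt_def]; simp only [j]; omega
  rw [← hA, ← hD, ← hAj, ← Matrix.det_mul, ← Matrix.det_mul]
  congr 1
  have e1 : (∑ i ∈ range (s + 2), aMat q t k i) * aMat q t k (s + 1) =
      wMat (t j k1) (wD q k j) * (∑ i ∈ range (s + 1), aMat q t k i) + aMat q t k (s + 1) := by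
    rw [sum_range_succ' _ (s + 1), add_mul, aMat_zero q t ht, one_mul, sum_mul,
      sum_congr rfl hkey, mul_sum]
  rw [mul_sub, mul_one, e1, sum_range_succ _ (s + 1), sub_mul, one_mul]
  abel

theorem det_generic [IsDomain R] (q : Fin n → Fin n → R)
    (hq : ∀ T : Finset (Fin n), 2 ≤ T.card → 1 - sg q T ≠ 0)
    (t : Fin n → Fin n → Equiv.Perm (Fin n))
    (ht : ∀ a b : Fin n, a ≤ b → IsTCycle a b (t b a)) (k : Fin n) (s : ℕ)
    (hs : (k : ℕ) + s < n) :
    (∑ i ∈ range (s + 1), aMat q t k i).det = ∏ m ∈ Icc 2 (s + 1), gFac q m := by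
  induction s with
  | zero => simp [aMat_zero q t ht]
  | succ s ih =>
    have h1 := det_step q t ht k s hs
    have h2 : gFac q (s + 2) ≠ 0 := by
      rw [gFac, Finset.prod_ne_zero_iff]
      intro T hT
      apply pow_ne_zero
      apply hq
      rw [mem_powersetCard_univ] at hT
      omega
    rw [ih (by omega)] at h1
    rw [Finset.prod_Icc_succ_top (by omega)]
    apply mul_right_cancel₀ (pow_ne_zero (s + 1) h2)
    rw [h1]
    ring

theorem map_sg {S : Type*} [CommRing S] (f : R →+* S) (q : Fin n → Fin n → R)
    (T : Finset (Fin n)) : f (sg q T) = sg (fun i j => f (q i j)) T := by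
  simp [sg, map_prod]

theorem map_aMat {S : Type*} [CommRing S] (f : R →+* S) (q : Fin n → Fin n → R)
    (t : Fin n → Fin n → Equiv.Perm (Fin n)) (k : Fin n) (s : ℕ) :
    f.mapMatrix (aMat q t k s) = aMat (fun i j => f (q i j)) t k s := by
  unfold aMat
  split_ifs
  · ext σ τ
    simp only [RingHom.mapMatrix_apply, Matrix.map_apply, wMat, wA]
    split_ifs <;> simp [map_prod]
  · simp

open Polynomial in
theorem det_complex (q : Fin n → Fin n → ℂ) (t : Fin n → Fin n → Equiv.Perm (Fin n))
    (ht : ∀ a b : Fin n, a ≤ b → IsTCycle a b (t b a)) (k : Fin n) (s : ℕ)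
    (hs : (k : ℕ) + s < n) :
    (∑ i ∈ range (s + 1), aMat q t k i).det = ∏ m ∈ Icc 2 (s + 1), gFac q m := by
  let q' : Fin n → Fin n → ℂ[X] := fun i j => X * C (q i j)
  have hq' : (fun i j => (evalRingHom (1 : ℂ)) (q' i j)) = q := by
    funext i j; simp [q']
  have h := det_generic q' ?_ t ht k s hs
  · have h2 := congrArg (evalRingHom (1 : ℂ)) h
    rw [RingHom.map_det, map_sum, map_prod] at h2
    simp only [map_aMat, hq', gFac, map_prod, map_pow, map_sub, map_one, map_sg] at h2
    exact h2
  · intro T hT h0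
    have h1 := congrArg (evalRingHom (0 : ℂ)) h0
    rw [map_sub, map_one, map_zero, map_sg] at h1
    obtain ⟨x, hx, y, hy, hxy⟩ := Finset.one_lt_card.mp (show 1 < T.card by omega)
    have : sg (fun i j => (evalRingHom (0 : ℂ)) (q' i j)) T = 0 := by
      rw [sg]
      apply Finset.prod_eq_zero hx
      apply Finset.prod_eq_zero (mem_erase.mpr ⟨hxy.symm, hy⟩)
      simp [q']
    rw [this] at h1
    simp at h1

end weights

/-- For `1 ≤ k ≤ n−1`, the determinant of `B_{Q,n−k+1} = ∑_{m=k}^{n} M_q(t_{m,k})`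
factors as `∏_{m=2}^{n−k+1} ∏_T (1 − σ_T)^{(m−2)!·(n−m)!}`, the inner product being
over all subsets `T ⊆ Fin n` of cardinality `m`. (For `k = 1` this is the determinant
of the matrix of the multidegree operator `∂^Q` on a generic weight subspace.) -/
theorem det_B_factorization (n : ℕ) (hn : 1 ≤ n) (q : Fin n → Fin n → ℂ)
    (t : Fin n → Fin n → Equiv.Perm (Fin n))
    (ht : ∀ a b : Fin n, a ≤ b → IsTCycle a b (t b a))
    (k : Fin n) (hk : (k : ℕ) + 1 < n) :
    (∑ m ∈ Finset.Ici k, twistMat n q (t m k)).det =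
      ∏ m ∈ Finset.Icc 2 (n - (k : ℕ)),
        ∏ T ∈ Finset.powersetCard m (Finset.univ : Finset (Fin n)),
          (1 - sigmaT q T) ^ (Nat.factorial (m - 2) * Nat.factorial (n - m)) := by
  have h := det_complex q t ht k (n - 1 - k) (by omega)
  have e : n - 1 - (k : ℕ) + 1 = n - k := by omega
  rw [e] at h
  have hsum : ∑ m ∈ Finset.Ici k, twistMat n q (t m k) = ∑ i ∈ range (n - k), aMat q t k i := by
    refine Finset.sum_bij (fun m _ => (m : ℕ) - k) ?_ ?_ ?_ ?_
    · intro m hm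
      rw [mem_Ici, Fin.le_def] at hm
      rw [mem_range]; omega
    · intro a ha b hb hab
      rw [mem_Ici, Fin.le_def] at ha hb
      apply Fin.ext; omega
    · intro i hi
      rw [mem_range] at hi
      refine ⟨⟨k + i, by omega⟩, ?_, ?_⟩
      · rw [mem_Ici, Fin.le_def]; simp
      · simp
    · intro m hm
      rw [mem_Ici] at hm
      have hm' : (k : ℕ) ≤ m := hm
      rw [twist_eq q hm (ht k m hm)]
      have e2 : (k : ℕ) + (m - k) = m := by omega
      simp only [aMat, e2, Fin.is_lt, dite_true, Fin.eta]
  rw [hsum, h]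
  simp only [gFac, sigmaT_eq]
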